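/- arXiv:1109.2251 — 4 statements merged into one kernel-verified Lean document; each statement's English description precedes it below -/
import Mathlib

section
/- Let K be a cubic number field (a number field of degree 3 over ℚ) whose discriminant d is a fundamental discriminant, and let g = gcd(3, d). Then for every algebraic integer x of K with Tr_{K/ℚ}(x) = 0, the integer 2·g divides Tr_{K/ℚ}(x²). -/
/-- An integer `d` is a fundamental discriminant if `d ≠ 1` and either
`d ≡ 1 (mod 4)` and `d` is squarefree, or `d ≡ 0 (mod 4)`, `d/4` is squarefree,
and `d/4 ≡ 2` or `3 (mod 4)`. -/
def IsFundamentalDiscriminant (d : ℤ) : Prop :=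
  d ≠ 1 ∧
    ((d % 4 = 1 ∧ Squarefree d) ∨
      (d % 4 = 0 ∧ Squarefree (d / 4) ∧ (d / 4 % 4 = 2 ∨ d / 4 % 4 = 3)))

/-!
Let `s = Tr(x²)`, `t = Tr(x³)`, `u = Tr(x⁴)`. Modulo `2`, Frobenius gives `s ≡ Tr(x)²`. When
`Tr(x) = 0`, the discriminant of the family `1, x, x²` is `3 (s u - t²) - s³`; it is also a
square times `d`, so the squarefree number `gcd(3, d)` divides `s³`, hence `s`.
-/

section Frobenius

variable {p : ℕ} [Fact p.Prime]

theorem matrix_trace_pow_prime_modEq {n : Type*} [Fintype n] [DecidableEq n] (M : Matrix n n ℤ) :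
    (M ^ p).trace ≡ M.trace ^ p [ZMOD p] := by
  rw [← ZMod.intCast_eq_intCast_iff]
  have h := ZMod.trace_pow_card ((Int.castRingHom (ZMod p)).mapMatrix M)
  rw [← map_pow] at h
  simpa [Matrix.trace] using h

theorem algebra_trace_pow_prime_modEq {A : Type*} [CommRing A] [Module.Free ℤ A]
    [Module.Finite ℤ A] (x : A) : Algebra.trace ℤ A (x ^ p) ≡ Algebra.trace ℤ A x ^ p [ZMOD p] := by
  classical
  rw [Algebra.trace_eq_matrix_trace (Module.Free.chooseBasis ℤ A),
    Algebra.trace_eq_matrix_trace (Module.Free.chooseBasis ℤ A), map_pow]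
  exact matrix_trace_pow_prime_modEq _

end Frobenius

section Discriminant

variable {R A : Type*} [CommRing R] [CommRing A] [Algebra R A]

theorem discr_basis_dvd_discr {ι : Type*} [Fintype ι] [DecidableEq ι] (b : Module.Basis ι R A)
    (v : ι → A) : Algebra.discr R b ∣ Algebra.discr R v := by
  rw [← b.toMatrix_map_vecMul v, Algebra.discr_of_matrix_vecMul]
  exact dvd_mul_left _ _

theorem discr_one_self_sq (x : A) :
    Algebra.discr R ![1, x, x ^ 2] =
      Algebra.trace R A 1 *
          (Algebra.trace R A (x ^ 2) * Algebra.trace R A (x ^ 4) - Algebra.trace R A (x ^ 3) ^ 2) -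
        Algebra.trace R A x *
          (Algebra.trace R A x * Algebra.trace R A (x ^ 4) -
            2 * Algebra.trace R A (x ^ 2) * Algebra.trace R A (x ^ 3)) -
        Algebra.trace R A (x ^ 2) ^ 3 := by
  have h_sq : x * x = x ^ 2 := by ring
  have h_cube : x * x ^ 2 = x ^ 3 := by ring
  have h_cube' : x ^ 2 * x = x ^ 3 := by ring
  have h_fourth : x ^ 2 * x ^ 2 = x ^ 4 := by ring
  simp only [Algebra.discr_def, Matrix.det_fin_three, Algebra.traceMatrix_apply,
    Algebra.traceForm_apply, Matrix.cons_val, one_mul, mul_one, h_sq, h_cube, h_cube', h_fourth]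
  ring

theorem dvd_trace_sq_of_dvd_discr (b : Module.Basis (Fin 3) R A) {g : R} (hg : IsRadical g)
    (h_three : g ∣ 3) (h_discr : g ∣ Algebra.discr R b) {x : A} (hx : g ∣ Algebra.trace R A x) :
    g ∣ Algebra.trace R A (x ^ 2) := by
  have h_trace_one : Algebra.trace R A 1 = 3 := by
    simpa using Algebra.trace_algebraMap_of_basis b (1 : R)
  have h_family : g ∣ Algebra.discr R ![1, x, x ^ 2] :=
    h_discr.trans (discr_basis_dvd_discr b _)
  rw [discr_one_self_sq, h_trace_one,
    dvd_sub_right ((h_three.mul_right _).sub (hx.mul_right _))] at h_family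
  exact hg 3 _ h_family

end Discriminant

theorem two_gcd_dvd_trace_sq_general {A : Type*} [CommRing A] (b : Module.Basis (Fin 3) ℤ A)
    {x : A} (hx : 2 * (Int.gcd 3 (Algebra.discr ℤ b) : ℤ) ∣ Algebra.trace ℤ A x) :
    2 * (Int.gcd 3 (Algebra.discr ℤ b) : ℤ) ∣ Algebra.trace ℤ A (x ^ 2) := by
  have := Module.Free.of_basis b
  have := Module.Finite.of_basis b
  set g : ℤ := ↑(Int.gcd 3 (Algebra.discr ℤ b))
  have hg_three : g ∣ 3 := Int.gcd_dvd_left ..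
  have h_coprime : IsCoprime 2 g :=
    IsCoprime.of_isCoprime_of_dvd_right (by norm_num) hg_three
  refine h_coprime.mul_dvd ?_ ?_
  · have h_trace : 2 ∣ Algebra.trace ℤ A x := (dvd_mul_right 2 g).trans hx
    exact (algebra_trace_pow_prime_modEq (p := 2) x).dvd_iff.mpr (dvd_pow h_trace two_ne_zero)
  · have hg_radical : IsRadical g :=
      (Int.prime_three.squarefree.squarefree_of_dvd hg_three).isRadical
    exact dvd_trace_sq_of_dvd_discr b hg_radical hg_three (Int.gcd_dvd_right ..)
      ((dvd_mul_left g 2).trans hx)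

/-- For a cubic field `K` of fundamental discriminant `d` and `g = gcd(3, d)`,
`2·g` divides the trace of `x²` for every trace-zero algebraic integer `x` of `K`. -/
theorem two_gcd_dvd_trace_sq (K : Type*) [Field K] [NumberField K]
    (hdeg : Module.finrank ℚ K = 3)
    (hfund : IsFundamentalDiscriminant (NumberField.discr K))
    (x : NumberField.RingOfIntegers K)
    (hx : Algebra.trace ℚ K (x : K) = 0) :
    ∃ m : ℤ,
      Algebra.trace ℚ K ((x : K) ^ 2) =
        ((2 * (Int.gcd 3 (NumberField.discr K) : ℤ) * m : ℤ) : ℚ) := by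
  let b := Module.finBasisOfFinrankEq ℤ (NumberField.RingOfIntegers K)
    ((NumberField.RingOfIntegers.rank K).trans hdeg)
  have h_trace : Algebra.trace ℤ _ x = 0 := mod_cast (Algebra.coe_trace_int x).trans hx
  obtain ⟨m, hm⟩ := two_gcd_dvd_trace_sq_general b (h_trace ▸ dvd_zero _)
  exact ⟨m, by rw [← map_pow, ← Algebra.coe_trace_int, hm, NumberField.discr_eq_discr]⟩
end

section
/- Let K be a cubic number field (a number field of degree 3 over ℚ) whose discriminant d is a fundamental discriminant, and let e₁, e₂ be a ℤ-basis of the rank-2 free ℤ-module O_K^0 of trace-zero algebraic integers of K. Then Tr_{K/ℚ}(e₁·e₂)² − Tr_{K/ℚ}(e₁²)·Tr_{K/ℚ}(e₂²) = −3d. -/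
/-!
If some `θ ∈ 𝓞 K` has trace `1`, then `θ` together with a `ℤ`-basis `e` of the trace-zero integers
is an integral basis of `K`. The coefficient of `θ` in `1` is `Tr 1 = n`, the degree of `K`, so
replacing the row of `θ` in the trace matrix by the combination of rows that expresses `1`
multiplies the determinant by `n`; the new row is `(Tr θ, Tr e₁, …) = (1, 0, …, 0)`, and what
remains is the determinant of the trace form on `e`. Such a `θ` exists unless all traces are
divisible by a common non-unit `a`; then `a ∣ Tr 1 = n` and `a ^ n` divides the discriminant, which
for a cubic field means `27 ∣ d`, whereas the square of an odd prime does not divide a fundamental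
discriminant.
-/

open Module NumberField

section LinearAlgebra

variable {R M : Type*} [CommRing R] [AddCommGroup M] [Module R M]

theorem exists_basis_fin_two_of_existsUnique {x y : M}
    (h : ∀ z, ∃! c : R × R, z = c.1 • x + c.2 • y) :
    ∃ b : Basis (Fin 2) R M, ⇑b = ![x, y] := by
  let f : R × R →ₗ[R] M :=
    (LinearMap.toSpanSingleton R M x).coprod (LinearMap.toSpanSingleton R M y)
  have hf : Function.Bijective f := (Function.bijective_iff_existsUnique f).mpr fun z ↦ by
    simpa [f, eq_comm] using h z
  refine ⟨(Basis.finTwoProd R).map (.ofBijective f hf), funext fun i ↦ ?_⟩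
  fin_cases i <;> simp [f]

theorem exists_basis_cons_of_basis_ker {m : ℕ} {f : M →ₗ[R] R} {θ : M} (hθ : f θ = 1)
    (e : Basis (Fin m) R f.ker) :
    ∃ b : Basis (Fin (m + 1)) R M, b 0 = θ ∧ ∀ i : Fin m, b i.succ = e i := by
  refine ⟨Basis.mkFinCons θ e (fun c x hx hc ↦ ?_) fun z ↦ ⟨-f z, ?_⟩, ?_, fun i ↦ ?_⟩
  · simpa [hθ, LinearMap.mem_ker.mp hx] using congrArg f hc
  · simp [hθ]
  all_goals simp

end LinearAlgebra

theorem det_eq_det_submatrix_succ_of_row_zero {R : Type*} [CommRing R] {m : ℕ}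
    {A : Matrix (Fin (m + 1)) (Fin (m + 1)) R} (h : A 0 = Pi.single 0 1) :
    A.det = (A.submatrix Fin.succ Fin.succ).det := by
  simp [Matrix.det_succ_row_zero, h, Fin.sum_univ_succ]

section Discriminant

variable {R S ι : Type*} [CommRing R] [CommRing S] [Algebra R S]

theorem discr_fin_two (x y : S) :
    Algebra.discr R ![x, y] =
      Algebra.trace R S (x ^ 2) * Algebra.trace R S (y ^ 2) - Algebra.trace R S (x * y) ^ 2 := by
  simp [Algebra.discr_def, Matrix.det_fin_two, Algebra.traceMatrix_apply, mul_comm y x, sq]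

theorem trace_one_of_basis [Fintype ι] (b : Basis ι R S) :
    Algebra.trace R S 1 = Fintype.card ι := by
  simpa using Algebra.trace_algebraMap_of_basis b 1

variable [Fintype ι] [DecidableEq ι]

theorem pow_card_dvd_discr_of_forall_dvd_trace {a : R} (h : ∀ x : S, a ∣ Algebra.trace R S x)
    (b : ι → S) : a ^ Fintype.card ι ∣ Algebra.discr R b := by
  choose q hq using h
  have hM : Algebra.traceMatrix R b = a • Matrix.of fun i j ↦ q (b i * b j) := by
    ext i j
    simp [Algebra.traceMatrix_apply, ← hq]
  rw [Algebra.discr_def, hM, Matrix.det_smul]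
  exact dvd_mul_right ..

theorem exists_trace_eq_one_of_isUnit_of_pow_dvd_discr [IsPrincipalIdealRing R] (b : Basis ι R S)
    (h : ∀ a : R, a ∣ Fintype.card ι → a ^ Fintype.card ι ∣ Algebra.discr R b → IsUnit a) :
    ∃ θ : S, Algebra.trace R S θ = 1 := by
  let I : Ideal R := (Algebra.trace R S).range
  let a := Submodule.IsPrincipal.generator I
  have ha : ∀ x, a ∣ Algebra.trace R S x := fun x ↦
    (Submodule.IsPrincipal.mem_iff_generator_dvd I).mp ⟨x, rfl⟩
  have ha_card : a ∣ Fintype.card ι := trace_one_of_basis b ▸ ha 1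
  have hI : I = ⊤ := I.eq_top_of_isUnit_mem (Submodule.IsPrincipal.generator_mem I)
    (h a ha_card (pow_card_dvd_discr_of_forall_dvd_trace ha b))
  exact (Ideal.eq_top_iff_one I).mp hI

theorem det_updateRow_traceMatrix {b : ι → S} {c : ι → R} (hc : ∑ k, c k • b k = 1) (j : ι) :
    ((Algebra.traceMatrix R b).updateRow j fun i ↦ Algebra.trace R S (b i)).det =
      c j * Algebra.discr R b := by
  have h_row : (fun i ↦ Algebra.trace R S (b i)) = ∑ k, c k • Algebra.traceMatrix R b k := by
    ext i
    conv_lhs => rw [← one_mul (b i), ← hc, Finset.sum_mul, map_sum]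
    simp [Algebra.traceMatrix_apply]
  rw [h_row, Matrix.det_updateRow_sum, Algebra.discr_def, smul_eq_mul]

theorem discr_tail_eq_mul_discr {m : ℕ} (b : Basis (Fin (m + 1)) R S)
    (h_zero : Algebra.trace R S (b 0) = 1)
    (h_succ : ∀ i : Fin m, Algebra.trace R S (b i.succ) = 0) :
    Algebra.discr R (fun i : Fin m ↦ b i.succ) = (m + 1) * Algebra.discr R b := by
  have h_repr : b.repr 1 0 = m + 1 := calc
    b.repr 1 0 = Algebra.trace R S (∑ k, b.repr 1 k • b k) := by
      simp [-Basis.sum_repr, Fin.sum_univ_succ, h_zero, h_succ]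
    _ = Algebra.trace R S 1 := by rw [b.sum_repr]
    _ = m + 1 := by simp [trace_one_of_basis b]
  have h_row : (fun i ↦ Algebra.trace R S (b i)) = Pi.single 0 1 := by
    ext i
    cases i using Fin.cases <;> simp [h_zero, h_succ]
  rw [← h_repr, ← det_updateRow_traceMatrix (b.sum_repr 1) 0, h_row,
    det_eq_det_submatrix_succ_of_row_zero (by simp)]
  rfl

end Discriminant

theorem discr_basis_ker_trace_eq_finrank_mul_discr {K : Type*} [Field K] [NumberField K] {m : ℕ}
    (e : Basis (Fin m) ℤ (Algebra.trace ℤ (𝓞 K)).ker)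
    (h : ∀ a : ℤ, a ∣ finrank ℚ K → a ^ finrank ℚ K ∣ discr K → IsUnit a) :
    Algebra.discr ℤ (fun i ↦ (e i : 𝓞 K)) = finrank ℚ K * discr K := by
  classical
  have h_card : Fintype.card (Free.ChooseBasisIndex ℤ (𝓞 K)) = finrank ℚ K := by
    rw [← finrank_eq_card_chooseBasisIndex, RingOfIntegers.rank]
  obtain ⟨θ, hθ⟩ := exists_trace_eq_one_of_isUnit_of_pow_dvd_discr (RingOfIntegers.basis K) (by
    rwa [h_card, discr_eq_discr])
  obtain ⟨b, hb_zero, hb_succ⟩ := exists_basis_cons_of_basis_ker hθ e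
  have h_deg : finrank ℚ K = m + 1 := by
    rw [← RingOfIntegers.rank, finrank_eq_card_basis b, Fintype.card_fin]
  have h_discr := discr_tail_eq_mul_discr b (by rw [hb_zero, hθ]) fun i ↦ by
    rw [hb_succ, LinearMap.mem_ker.mp (e i).2]
  rw [discr_eq_discr] at h_discr
  simpa [hb_succ, h_deg] using h_discr

theorem IsFundamentalDiscriminant.isUnit_of_odd_of_mul_self_dvd {d a : ℤ}
    (hd : IsFundamentalDiscriminant d) (ha : Odd a) (h : a * a ∣ d) : IsUnit a := by
  obtain ⟨-, ⟨-, hsq⟩ | ⟨hd4, hsq, -⟩⟩ := hd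
  · exact hsq a h
  · have ha_two : IsCoprime a 2 := Int.isCoprime_two_right.mpr ha
    have h_coprime : IsCoprime (a * a) (2 ^ 2) := (ha_two.mul_left ha_two).pow_right
    rw [← Int.mul_ediv_cancel' (Int.dvd_of_emod_eq_zero hd4)] at h
    exact hsq a (h_coprime.dvd_of_dvd_mul_left h)

theorem trace_form_det_eq_neg_three_discr_general (K : Type*) [Field K] [NumberField K]
    (hdeg : finrank ℚ K = 3) (hdiscr : ¬ 27 ∣ discr K) (e₁ e₂ : 𝓞 K)
    (he₁ : Algebra.trace ℚ K (e₁ : K) = 0)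
    (he₂ : Algebra.trace ℚ K (e₂ : K) = 0)
    (hbasis : ∀ x : 𝓞 K, Algebra.trace ℚ K (x : K) = 0 →
      ∃! mn : ℤ × ℤ, x = mn.1 • e₁ + mn.2 • e₂) :
    (Algebra.trace ℚ K ((e₁ : K) * (e₂ : K))) ^ 2 -
        Algebra.trace ℚ K ((e₁ : K) ^ 2) * Algebra.trace ℚ K ((e₂ : K) ^ 2) =
      ((-3 * discr K : ℤ) : ℚ) := by
  simp only [← map_mul, ← map_pow, ← Algebra.coe_trace_int, Int.cast_eq_zero] at he₁ he₂ hbasis ⊢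
  obtain ⟨e, he⟩ := exists_basis_fin_two_of_existsUnique (R := ℤ)
    (M := (Algebra.trace ℤ (𝓞 K)).ker) (x := ⟨e₁, he₁⟩) (y := ⟨e₂, he₂⟩) fun z ↦ by
      simpa [Subtype.ext_iff] using hbasis z z.2
  have h_unit : ∀ a : ℤ, a ∣ finrank ℚ K → a ^ finrank ℚ K ∣ discr K → IsUnit a := by
    intro a ha ha_pow
    rw [hdeg] at ha ha_pow
    refine (Int.prime_three.irreducible.dvd_iff.mp ha).resolve_right fun h_assoc ↦ hdiscr ?_
    exact (h_assoc.pow_pow (n := 3)).dvd.trans ha_pow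
  have h_coe : (fun i ↦ (e i : 𝓞 K)) = ![e₁, e₂] := by
    ext i
    fin_cases i <;> simp [he]
  have h_discr := discr_basis_ker_trace_eq_finrank_mul_discr e h_unit
  rw [h_coe, discr_fin_two, hdeg] at h_discr
  have h_discr_rat := congrArg (Int.cast : ℤ → ℚ) h_discr
  push_cast at h_discr_rat ⊢
  linear_combination -h_discr_rat

/-- If `e₁, e₂` is a ℤ-basis of the module of trace-zero algebraic integers of a cubic
field `K` of fundamental discriminant `d`, then
`Tr(e₁e₂)² − Tr(e₁²)·Tr(e₂²) = −3d`. -/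
theorem trace_form_det_eq_neg_three_discr (K : Type*) [Field K] [NumberField K]
    (hdeg : Module.finrank ℚ K = 3)
    (hfund : IsFundamentalDiscriminant (NumberField.discr K))
    (e₁ e₂ : NumberField.RingOfIntegers K)
    (he₁ : Algebra.trace ℚ K (e₁ : K) = 0)
    (he₂ : Algebra.trace ℚ K (e₂ : K) = 0)
    (hbasis : ∀ x : NumberField.RingOfIntegers K, Algebra.trace ℚ K (x : K) = 0 →
      ∃! mn : ℤ × ℤ, x = mn.1 • e₁ + mn.2 • e₂) :
    (Algebra.trace ℚ K ((e₁ : K) * (e₂ : K))) ^ 2 -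
        Algebra.trace ℚ K ((e₁ : K) ^ 2) * Algebra.trace ℚ K ((e₂ : K) ^ 2) =
      ((-3 * NumberField.discr K : ℤ) : ℚ) :=
  trace_form_det_eq_neg_three_discr_general K hdeg (fun h ↦ Int.prime_three.not_isUnit <|
    hfund.isUnit_of_odd_of_mul_self_dvd (by decide) (dvd_trans (by norm_num) h))
    e₁ e₂ he₁ he₂ hbasis
end

section
/- Let K be a cubic number field (a number field of degree 3 over ℚ) whose discriminant d is a fundamental discriminant, let g = gcd(3, d), and let e₁, e₂ be a ℤ-basis of the rank-2 free ℤ-module O_K^0 of trace-zero algebraic integers of K. Then there exist integers a, b, c with 2g·a = Tr_{K/ℚ}(e₁²), g·b = Tr_{K/ℚ}(e₁·e₂), 2g·c = Tr_{K/ℚ}(e₂²), and gcd(a, b, c) = 1; that is, the binary quadratic form t_K = Tr_{K/ℚ}(x²)/(2g) restricted to O_K^0 is an integral primitive binary quadratic form. -/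
/-!
Let `e₁, e₂` be a basis of the trace-zero part of a cubic ring `R` of fundamental discriminant `d`.
If every trace were divisible by `3`, then `27 ∣ d`, which is impossible; so some `u` has trace `1`,
and `u, e₁, e₂` is a basis of `R`. Let `G` be its Gram matrix for the trace form and `v` the
coordinate vector of `1`. Then `G v = (1, 0, 0)` and `v₀ = Tr 1 = 3`, and multiplying by the
adjugate gives `adj G · (1, 0, 0) = d v`. The first entry of this identity says that the trace form
on `e₁, e₂` has determinant `3 d`. Moreover, modulo `gcd(3, d)` the first column of `adj G` and `v₀`
vanish, which forces the trace form on `e₁, e₂` to vanish as well. Since `Tr x² ≡ Tr x = 0 (mod 2)`,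
dividing by `2 gcd(3, d)` yields an integral form, of discriminant `-3 d / gcd(3, d)²`. A common
factor `n` of its coefficients would exhibit `d` as `n²` times another discriminant.
-/

open Matrix Module NumberField

/-- The congruence condition satisfied by discriminants of integral binary quadratic forms and
of rings that are free of finite rank over `ℤ`. -/
def IsDiscriminantResidue (d : ℤ) : Prop :=
  d % 4 = 0 ∨ d % 4 = 1

/-- A discriminant `d` that is not a proper square multiple of another one: a fundamental
discriminant or `1`. The value `1` is the discriminant of `ℤ × ℤ × ℤ`. -/
def IsMinimalDiscriminant (d : ℤ) : Prop :=
  IsDiscriminantResidue d ∧ ∀ n D : ℤ, IsDiscriminantResidue D → d = n ^ 2 * D → IsUnit n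

theorem isDiscriminantResidue_discrim (a b c : ℤ) : IsDiscriminantResidue (discrim a b c) := by
  unfold IsDiscriminantResidue discrim
  rcases Int.even_or_odd' b with ⟨k, rfl | rfl⟩
  · left; ring_nf; omega
  · right; ring_nf; omega

theorem discrim_mul_left {S : Type*} [CommRing S] (n a b c : S) :
    discrim (n * a) (n * b) (n * c) = n ^ 2 * discrim a b c := by
  unfold discrim; ring

theorem IsFundamentalDiscriminant.isMinimalDiscriminant {d : ℤ}
    (hd : IsFundamentalDiscriminant d) : IsMinimalDiscriminant d := by
  obtain ⟨-, ⟨h1, hsq⟩ | ⟨h0, hsq, hres⟩⟩ := hd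
  · exact ⟨.inr h1, fun n D _ hnD => hsq n ⟨D, by rw [hnD, sq]⟩⟩
  refine ⟨.inl h0, fun n D hD hnD => ?_⟩
  obtain ⟨f, rfl⟩ := Int.dvd_of_emod_eq_zero h0
  rw [Int.mul_ediv_cancel_left _ four_ne_zero] at hsq hres
  rcases Int.even_or_odd' n with ⟨k, rfl | rfl⟩
  · have hf : f = k * k * D := by linarith
    have hk : k * k = 1 := Int.isUnit_mul_self (hsq k ⟨D, hf⟩)
    rw [hk, one_mul] at hf
    unfold IsDiscriminantResidue at hD
    omega
  · have hcop : IsCoprime (4 : ℤ) ((2 * k + 1) ^ 2) := ⟨-(k * (k + 1)), 1, by ring⟩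
    obtain ⟨D', rfl⟩ := hcop.dvd_of_dvd_mul_left ⟨f, hnD.symm⟩
    exact hsq _ ⟨D', by linarith⟩

theorem IsMinimalDiscriminant.not_nine_dvd {d : ℤ} (hd : IsMinimalDiscriminant d) : ¬ 9 ∣ d := by
  rintro ⟨D, rfl⟩
  have hD : IsDiscriminantResidue D := by
    have := hd.1
    unfold IsDiscriminantResidue at *
    omega
  exact absurd (hd.2 3 D hD (by ring)) (by decide)

theorem IsMinimalDiscriminant.isUnit_of_gcd_sq_mul {d n D : ℤ} (hd : IsMinimalDiscriminant d)
    (hD : IsDiscriminantResidue D) (h : (Int.gcd 3 d : ℤ) ^ 2 * (n ^ 2 * D) = -3 * d) :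
    IsUnit n := by
  by_cases h3 : 3 ∣ d
  · rw [Int.gcd_eq_left (by norm_num) h3] at h
    refine hd.2 n (-3 * D) ?_ (by linarith)
    unfold IsDiscriminantResidue at *
    omega
  · have hgcd : Int.gcd 3 d = 1 :=
      Int.isCoprime_iff_gcd_eq_one.mp (Int.prime_three.coprime_iff_not_dvd.mpr h3)
    rw [hgcd, Nat.cast_one, one_pow, one_mul] at h
    have hn : ¬ 3 ∣ n := by
      rintro ⟨k, rfl⟩
      exact h3 ⟨-(k ^ 2 * D), by linarith⟩
    have h3nD : 3 ∣ n ^ 2 * D := ⟨-d, by rw [h]; ring⟩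
    obtain ⟨D', rfl⟩ : 3 ∣ D :=
      (Int.prime_three.coprime_iff_not_dvd.mpr hn).pow_right.dvd_of_dvd_mul_left h3nD
    refine hd.2 n (-D') ?_ (by linarith)
    unfold IsDiscriminantResidue at *
    omega

theorem IsMinimalDiscriminant.gcd_coeffs_eq_one {d a b c : ℤ} (hd : IsMinimalDiscriminant d)
    (h : (Int.gcd 3 d : ℤ) ^ 2 * discrim a b c = -3 * d) : Int.gcd a (Int.gcd b c) = 1 := by
  set n := Int.gcd a (Int.gcd b c)
  have hbc : (n : ℤ) ∣ Int.gcd b c := Int.gcd_dvd_right ..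
  obtain ⟨a', ha⟩ : (n : ℤ) ∣ a := Int.gcd_dvd_left ..
  obtain ⟨b', hb⟩ : (n : ℤ) ∣ b := hbc.trans (Int.gcd_dvd_left ..)
  obtain ⟨c', hc⟩ : (n : ℤ) ∣ c := hbc.trans (Int.gcd_dvd_right ..)
  rw [ha, hb, hc, discrim_mul_left] at h
  have hn : IsUnit (n : ℤ) := hd.isUnit_of_gcd_sq_mul (isDiscriminantResidue_discrim a' b' c') h
  exact Nat.isUnit_iff.mp (Int.ofNat_isUnit.mp hn)

section Matrix

variable {S : Type*} [CommRing S]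

theorem adjugate_apply_of_mulVec_eq_single {n : Type*} [Fintype n] [DecidableEq n]
    {G : Matrix n n S} {v : n → S} {i : n} (h : G *ᵥ v = Pi.single i 1) (j : n) :
    G.adjugate j i = G.det * v j := by
  have hadj := congrFun (congrArg (G.adjugate *ᵥ ·) h) j
  simpa [mulVec_mulVec, adjugate_mul, smul_mulVec] using hadj.symm

theorem apply_eq_sum_minor_mul {m n : Type*} [DecidableEq m] [Fintype n] {G : Matrix m n S}
    {v : n → S} {i₀ i : m} (hv : G *ᵥ v = Pi.single i₀ 1) (hi : i ≠ i₀) (j : n) :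
    G i j = ∑ l, (G i j * G i₀ l - G i₀ j * G i l) * v l :=
  calc G i j = G i j * (G *ᵥ v) i₀ - G i₀ j * (G *ᵥ v) i := by simp [hv, hi]
    _ = ∑ l, (G i j * G i₀ l - G i₀ j * G i l) * v l := by
      simp only [mulVec, dotProduct, Finset.mul_sum, ← Finset.sum_sub_distrib]
      exact Finset.sum_congr rfl fun l _ => by ring

theorem dvd_of_mulVec_eq_single {G : Matrix (Fin 3) (Fin 3) S} (hG : G.IsSymm) {v : Fin 3 → S}
    (hv : G *ᵥ v = Pi.single 0 1) {k : S} (hk : k ∣ v 0) (hdet : k ∣ G.det) {i j : Fin 3}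
    (hi : i ≠ 0) (hj : j ≠ 0) : k ∣ G i j := by
  have hadj (l : Fin 3) : k ∣ G.adjugate 0 l := by
    rw [← hG.adjugate.apply, adjugate_apply_of_mulVec_eq_single hv]
    exact hdet.mul_right _
  -- Up to sign, this minor is the entry `(0, l)` of `adj G` with `l ≠ 0` and `l ≠ i`.
  have hcofactor : k ∣ G i 1 * G 0 2 - G 0 1 * G i 2 := by
    have h1 := hadj 1
    have h2 := hadj 2
    simp only [adjugate_fin_three, of_apply, cons_val] at h1 h2
    obtain rfl | rfl : i = 1 ∨ i = 2 := by fin_omega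
    · convert! (dvd_neg.mpr h2) using 1; ring
    · convert! h1 using 1; ring
  have hminor (l : Fin 3) (hl : l ≠ 0) : k ∣ G i j * G 0 l - G 0 j * G i l := by
    obtain rfl | rfl : j = 1 ∨ j = 2 := by fin_omega
    all_goals obtain rfl | rfl : l = 1 ∨ l = 2 := by fin_omega
    · simp [mul_comm]
    · exact hcofactor
    · convert! (dvd_neg.mpr hcofactor) using 1; ring
    · simp [mul_comm]
  rw [apply_eq_sum_minor_mul hv hi j]
  refine Finset.dvd_sum fun l _ => ?_
  rcases eq_or_ne l 0 with rfl | hl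
  · exact hk.mul_left _
  · exact (hminor l hl).mul_right _

end Matrix

section Basis

variable {S M : Type*} [CommRing S] [AddCommGroup M] [Module S M]

theorem exists_basis_of_existsUnique_pair {x y : M}
    (h : ∀ z : M, ∃! c : S × S, z = c.1 • x + c.2 • y) :
    ∃ b : Basis (Fin 2) S M, ⇑b = ![x, y] := by
  have hli : LinearIndependent S ![x, y] := LinearIndependent.pair_iff.mpr fun s t hst => by
    simpa using (h 0).unique (y₁ := (s, t)) (y₂ := (0, 0)) hst.symm (by simp)
  have hspan : ⊤ ≤ Submodule.span S (Set.range ![x, y]) := fun z _ => by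
    obtain ⟨c, hc, -⟩ := h z
    rw [Matrix.range_cons, Matrix.range_cons, Matrix.range_empty, Set.union_empty]
    exact Submodule.mem_span_pair.mpr ⟨c.1, c.2, hc.symm⟩
  exact ⟨.mk hli hspan, Basis.coe_mk hli hspan⟩

/-- The basis `u, b 0, …, b (n - 1)` of `M`, for a vector `u` with `f u = 1` and a basis `b` of the
kernel of the functional `f`. -/
noncomputable def basisConsKer {n : ℕ} (f : M →ₗ[S] S) {u : M} (hu : f u = 1)
    (b : Basis (Fin n) S (LinearMap.ker f)) : Basis (Fin (n + 1)) S M :=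
  Basis.mkFinCons u b
    (fun c x hx h => by simpa [hu, LinearMap.mem_ker.mp hx] using congrArg f h)
    (fun z => ⟨-f z, by simp [hu]⟩)

theorem coe_basisConsKer {n : ℕ} (f : M →ₗ[S] S) {u : M} (hu : f u = 1)
    (b : Basis (Fin n) S (LinearMap.ker f)) :
    ⇑(basisConsKer f hu b) = Fin.cons u ((↑) ∘ b) :=
  Basis.coe_mkFinCons ..

theorem apply_basisConsKer {n : ℕ} (f : M →ₗ[S] S) {u : M} (hu : f u = 1)
    (b : Basis (Fin n) S (LinearMap.ker f)) (i : Fin (n + 1)) :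
    f (basisConsKer f hu b i) = Pi.single (M := fun _ => S) 0 1 i := by
  rw [coe_basisConsKer]
  refine Fin.cases (by simpa using hu) (fun j => ?_) i
  simp

theorem coord_zero_basisConsKer {n : ℕ} (f : M →ₗ[S] S) {u : M} (hu : f u = 1)
    (b : Basis (Fin n) S (LinearMap.ker f)) : (basisConsKer f hu b).coord 0 = f :=
  (basisConsKer f hu b).ext fun i => by
    rw [apply_basisConsKer, Basis.coord_apply, Basis.repr_self, Finsupp.single_eq_pi_single]
    simp [Pi.single_apply, eq_comm]

end Basis

section Trace

variable {R : Type*} [CommRing R]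

theorem trace_pow_prime_modEq [Module.Free ℤ R] [Module.Finite ℤ R] {p : ℕ} (hp : p.Prime)
    (x : R) : Algebra.trace ℤ R (x ^ p) ≡ Algebra.trace ℤ R x [ZMOD p] := by
  have : Fact p.Prime := ⟨hp⟩
  let b := Module.finBasis ℤ R
  let M := (Algebra.leftMulMatrix b x).map (Int.castRingHom (ZMod p))
  rw [← ZMod.intCast_eq_intCast_iff]
  calc ((Algebra.trace ℤ R (x ^ p) : ℤ) : ZMod p)
      = (M ^ p).trace := by
        rw [Algebra.trace_eq_matrix_trace b, map_pow, ← Matrix.map_pow]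
        exact AddMonoidHom.map_trace (Int.castRingHom (ZMod p)) _
    _ = M.trace ^ p := ZMod.trace_pow_card M
    _ = M.trace := ZMod.pow_card _
    _ = (Algebra.trace ℤ R x : ℤ) := by
        rw [Algebra.trace_eq_matrix_trace b]
        exact (AddMonoidHom.map_trace (Int.castRingHom (ZMod p)) _).symm

theorem pow_card_dvd_discr {S : Type*} [CommRing S] [Algebra S R] {ι : Type*} [Fintype ι]
    [DecidableEq ι] (b : ι → R) {k : S} (h : ∀ x : R, k ∣ Algebra.trace S R x) :
    k ^ Fintype.card ι ∣ Algebra.discr S b := by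
  choose q hq using h
  have hmatrix : Algebra.traceMatrix S b = k • Matrix.of fun i j => q (b i * b j) := by
    ext i j
    simp [Algebra.traceMatrix_apply, Algebra.traceForm_apply, hq (b i * b j)]
  rw [Algebra.discr_def, hmatrix, det_smul]
  exact dvd_mul_right _ _

theorem exists_trace_eq_one {ι : Type*} [Fintype ι] [DecidableEq ι] (b : Basis ι ℤ R)
    (hprime : (Fintype.card ι).Prime)
    (hdiscr : ¬ (Fintype.card ι : ℤ) ^ Fintype.card ι ∣ Algebra.discr ℤ b) :
    ∃ u : R, Algebra.trace ℤ R u = 1 := by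
  obtain ⟨x, hx⟩ : ∃ x : R, ¬ (Fintype.card ι : ℤ) ∣ Algebra.trace ℤ R x := by
    contrapose! hdiscr
    exact pow_card_dvd_discr b hdiscr
  have hone : Algebra.trace ℤ R 1 = Fintype.card ι := by
    simpa using Algebra.trace_algebraMap_of_basis b 1
  obtain ⟨s, t, hst⟩ := (Nat.prime_iff_prime_int.mp hprime).coprime_iff_not_dvd.mpr hx
  exact ⟨s • 1 + t • x, by rwa [map_add, map_smul, map_smul, hone, smul_eq_mul, smul_eq_mul]⟩

variable {S : Type*} [CommRing S] [Algebra S R]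

theorem traceMatrix_mulVec_equivFun_one {ι : Type*} [Fintype ι] [DecidableEq ι] {b : Basis ι S R}
    {i : ι} (hb : b.coord i = Algebra.trace S R) :
    Algebra.traceMatrix S b *ᵥ b.equivFun 1 = Pi.single i 1 := by
  rw [Algebra.traceMatrix_of_basis_mulVec]
  ext j
  rw [one_mul, ← hb, Basis.coord_apply, Basis.repr_self, Finsupp.single_eq_pi_single]
  simp [Pi.single_apply, eq_comm]

theorem equivFun_one_eq_card {ι : Type*} [Fintype ι] {b : Basis ι S R} {i : ι}
    (hb : b.coord i = Algebra.trace S R) : b.equivFun 1 i = Fintype.card ι := by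
  simpa [← hb] using Algebra.trace_algebraMap_of_basis b 1

theorem trace_mul_trace_sub_sq_eq_discr {b : Basis (Fin 3) S R}
    (hb : b.coord 0 = Algebra.trace S R) :
    Algebra.trace S R (b 1 ^ 2) * Algebra.trace S R (b 2 ^ 2) - Algebra.trace S R (b 1 * b 2) ^ 2 =
      3 * Algebra.discr S b := by
  have h := adjugate_apply_of_mulVec_eq_single (traceMatrix_mulVec_equivFun_one hb) 0
  rw [equivFun_one_eq_card hb, ← Algebra.discr_def, adjugate_fin_three] at h
  simp only [Algebra.traceMatrix_apply, Algebra.traceForm_apply, mul_comm (b 2) (b 1), of_apply,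
    cons_val, Fintype.card_fin, Nat.cast_ofNat] at h
  rw [sq (b 1), sq (b 2)]
  linear_combination h

theorem dvd_trace_mul_of_dvd_discr {b : Basis (Fin 3) S R} (hb : b.coord 0 = Algebra.trace S R)
    {k : S} (hk : k ∣ 3) (hdiscr : k ∣ Algebra.discr S b) {i j : Fin 3}
    (hi : i ≠ 0) (hj : j ≠ 0) : k ∣ Algebra.trace S R (b i * b j) :=
  dvd_of_mulVec_eq_single (.ext fun i j => (Algebra.traceForm_isSymm S).eq (b j) (b i))
    (traceMatrix_mulVec_equivFun_one hb) (by simpa [equivFun_one_eq_card hb] using hk) hdiscr hi hj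

theorem two_mul_gcd_dvd_trace_sq {b : Basis (Fin 3) ℤ R} (hb : b.coord 0 = Algebra.trace ℤ R)
    {i : Fin 3} (hi : i ≠ 0) :
    2 * (Int.gcd 3 (Algebra.discr ℤ b) : ℤ) ∣ Algebra.trace ℤ R (b i ^ 2) := by
  have := Module.Free.of_basis b
  have := Module.Finite.of_basis b
  have htwo : (2 : ℤ) ∣ Algebra.trace ℤ R (b i ^ 2) :=
    (trace_pow_prime_modEq Nat.prime_two _).dvd_iff.mpr (by simp [← hb, hi.symm])
  have hgcd : (Int.gcd 3 (Algebra.discr ℤ b) : ℤ) ∣ Algebra.trace ℤ R (b i ^ 2) := by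
    rw [sq]
    exact dvd_trace_mul_of_dvd_discr hb (Int.gcd_dvd_left ..) (Int.gcd_dvd_right ..) hi hi
  have hcop : IsCoprime (2 : ℤ) (Int.gcd 3 (Algebra.discr ℤ b)) :=
    (Int.isCoprime_iff_gcd_eq_one.mpr (by norm_num : Int.gcd 2 3 = 1)).of_isCoprime_of_dvd_right
      (Int.gcd_dvd_left ..)
  exact hcop.mul_dvd htwo hgcd

end Trace

theorem traceForm_primitive_general {R : Type*} [CommRing R] (b : Basis (Fin 3) ℤ R)
    (hd : IsMinimalDiscriminant (Algebra.discr ℤ b))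
    (e : Basis (Fin 2) ℤ (LinearMap.ker (Algebra.trace ℤ R))) :
    ∃ A B C : ℤ,
      2 * (Int.gcd 3 (Algebra.discr ℤ b) : ℤ) * A = Algebra.trace ℤ R ((e 0 : R) ^ 2) ∧
      (Int.gcd 3 (Algebra.discr ℤ b) : ℤ) * B = Algebra.trace ℤ R ((e 0 : R) * (e 1 : R)) ∧
      2 * (Int.gcd 3 (Algebra.discr ℤ b) : ℤ) * C = Algebra.trace ℤ R ((e 1 : R) ^ 2) ∧
      Int.gcd A (Int.gcd B C) = 1 := by
  have h27 : ¬ (27 : ℤ) ∣ Algebra.discr ℤ b := fun h => hd.not_nine_dvd (dvd_trans ⟨3, rfl⟩ h)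
  obtain ⟨u, hu⟩ := exists_trace_eq_one b (by norm_num [Nat.prime_three]) (by simpa using h27)
  let b' := basisConsKer (Algebra.trace ℤ R) hu e
  have hb' : b'.coord 0 = Algebra.trace ℤ R := coord_zero_basisConsKer _ hu e
  have h0 : b' 1 = e 0 := congrFun (coe_basisConsKer _ hu e) 1
  have h1 : b' 2 = e 1 := congrFun (coe_basisConsKer _ hu e) 2
  rw [Algebra.discr_eq_discr R b b'] at hd ⊢
  rw [← h0, ← h1]
  obtain ⟨A, hA⟩ := two_mul_gcd_dvd_trace_sq hb' (i := 1) (by decide)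
  obtain ⟨C, hC⟩ := two_mul_gcd_dvd_trace_sq hb' (i := 2) (by decide)
  obtain ⟨B, hB⟩ := dvd_trace_mul_of_dvd_discr hb' (Int.gcd_dvd_left ..) (Int.gcd_dvd_right ..)
    (i := 1) (j := 2) (by decide) (by decide)
  refine ⟨A, B, C, hA.symm, hB.symm, hC.symm, hd.gcd_coeffs_eq_one ?_⟩
  have hdet := trace_mul_trace_sub_sq_eq_discr hb'
  rw [hA, hC, hB] at hdet
  rw [discrim]
  linear_combination -hdet

theorem exists_basis_ker_trace {K : Type*} [Field K] [NumberField K] {e₁ e₂ : 𝓞 K}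
    (he₁ : Algebra.trace ℚ K (e₁ : K) = 0) (he₂ : Algebra.trace ℚ K (e₂ : K) = 0)
    (hbasis : ∀ x : 𝓞 K, Algebra.trace ℚ K (x : K) = 0 →
      ∃! mn : ℤ × ℤ, x = mn.1 • e₁ + mn.2 • e₂) :
    ∃ e : Basis (Fin 2) ℤ (LinearMap.ker (Algebra.trace ℤ (𝓞 K))),
      (e 0 : 𝓞 K) = e₁ ∧ (e 1 : 𝓞 K) = e₂ := by
  have hker (x : 𝓞 K) : x ∈ LinearMap.ker (Algebra.trace ℤ (𝓞 K)) ↔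
      Algebra.trace ℚ K (x : K) = 0 := by
    rw [LinearMap.mem_ker, ← Algebra.coe_trace_int, Int.cast_eq_zero]
  obtain ⟨e, he⟩ := exists_basis_of_existsUnique_pair (S := ℤ)
    (x := (⟨e₁, (hker e₁).mpr he₁⟩ : LinearMap.ker _)) (y := ⟨e₂, (hker e₂).mpr he₂⟩)
    fun z => by simpa [Subtype.ext_iff] using hbasis z ((hker z).mp z.2)
  exact ⟨e, by simp [he], by simp [he]⟩

/-- If `e₁, e₂` is a ℤ-basis of the module of trace-zero algebraic integers of a cubic
field `K` of fundamental discriminant `d`, and `g = gcd(3, d)`, then the form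
`t_K = Tr(x²)/(2g)` on `O_K^0` is an integral primitive binary quadratic form: there are
integers `a, b, c` with `2g·a = Tr(e₁²)`, `g·b = Tr(e₁e₂)`, `2g·c = Tr(e₂²)` and
`gcd(a, b, c) = 1`. -/
theorem traceForm_primitive (K : Type*) [Field K] [NumberField K]
    (hdeg : Module.finrank ℚ K = 3)
    (hfund : IsFundamentalDiscriminant (NumberField.discr K))
    (e₁ e₂ : NumberField.RingOfIntegers K)
    (he₁ : Algebra.trace ℚ K (e₁ : K) = 0)
    (he₂ : Algebra.trace ℚ K (e₂ : K) = 0)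
    (hbasis : ∀ x : NumberField.RingOfIntegers K, Algebra.trace ℚ K (x : K) = 0 →
      ∃! mn : ℤ × ℤ, x = mn.1 • e₁ + mn.2 • e₂) :
    ∃ a b c : ℤ,
      ((2 * (Int.gcd 3 (NumberField.discr K) : ℤ) * a : ℤ) : ℚ) =
          Algebra.trace ℚ K ((e₁ : K) ^ 2) ∧
      (((Int.gcd 3 (NumberField.discr K) : ℤ) * b : ℤ) : ℚ) =
          Algebra.trace ℚ K ((e₁ : K) * (e₂ : K)) ∧
      ((2 * (Int.gcd 3 (NumberField.discr K) : ℤ) * c : ℤ) : ℚ) =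
          Algebra.trace ℚ K ((e₂ : K) ^ 2) ∧
      Int.gcd a (Int.gcd b c) = 1 := by
  let b := finBasisOfFinrankEq ℤ (𝓞 K) ((RingOfIntegers.rank K).trans hdeg)
  obtain ⟨e, rfl, rfl⟩ := exists_basis_ker_trace he₁ he₂ hbasis
  rw [← discr_eq_discr K b] at hfund ⊢
  simp only [← map_pow, ← map_mul, ← Algebra.coe_trace_int, Int.cast_inj]
  exact traceForm_primitive_general b hfund.isMinimalDiscriminant e
end

section
/- Let Q and Q₁ be integral binary quadratic forms with the same discriminant. If there exists a prime p that is represented by both Q and Q₁, then Q and Q₁ are GL₂(ℤ)-equivalent. -/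
/-- An integral binary quadratic form `a x² + b x y + c y²`. -/
structure BinaryQF where
  a : ℤ
  b : ℤ
  c : ℤ

namespace BinaryQF

/-- Evaluation of the form at `(x, y)`. -/
def eval (Q : BinaryQF) (x y : ℤ) : ℤ := Q.a * x ^ 2 + Q.b * x * y + Q.c * y ^ 2

/-- The discriminant `b² − 4ac`. -/
def disc (Q : BinaryQF) : ℤ := Q.b ^ 2 - 4 * Q.a * Q.c

/-- A form is primitive if `gcd(a, b, c) = 1`. -/
def IsPrimitive (Q : BinaryQF) : Prop := Int.gcd Q.a (Int.gcd Q.b Q.c) = 1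

/-- A form is positive definite if `a > 0` and its discriminant is negative. -/
def IsPosDef (Q : BinaryQF) : Prop := 0 < Q.a ∧ Q.disc < 0

/-- `Q` and `Q'` are GL₂(ℤ)-equivalent if there is an integer matrix of
determinant `±1` taking one to the other. -/
def Equiv (Q Q' : BinaryQF) : Prop :=
  ∃ p q r s : ℤ, (p * s - q * r = 1 ∨ p * s - q * r = -1) ∧
    ∀ x y : ℤ, Q'.eval x y = Q.eval (p * x + q * y) (r * x + s * y)

/-- The number of representations of `n` by `Q`. -/
noncomputable def rep (Q : BinaryQF) (n : ℤ) : ℕ :=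
  Nat.card {v : ℤ × ℤ // Q.eval v.1 v.2 = n}

/-- `n` is represented by `Q` if `Q(x, y) = n` for some integers `x, y`. -/
def Represents (Q : BinaryQF) (n : ℤ) : Prop := ∃ x y : ℤ, Q.eval x y = n

end BinaryQF

/-!
A form that represents a squarefree integer `n` does so at a coprime pair, since
`Q (d u, d v) = d² Q (u, v)`; completing that pair to a unimodular matrix shows that `Q` is
equivalent to a form with leading coefficient `n`. Given `n` and the discriminant `b² - 4 n c`,
such a form is determined by `b`, and up to equivalence by `± b` modulo `2 n`. When `n` is prime,
the congruence `b² ≡ b'² (mod 4 n)` already forces `b ≡ ± b' (mod 2 n)`.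
-/

theorem modEq_or_modEq_neg_of_sq_modEq_sq {p b c : ℤ} (hp : Prime p)
    (h : b ^ 2 ≡ c ^ 2 [ZMOD 4 * p]) : b ≡ c [ZMOD 2 * p] ∨ b ≡ -c [ZMOD 2 * p] := by
  obtain ⟨k, hk⟩ := h.dvd
  have h_even : Even (c - b) := by
    have : Even (c ^ 2 - b ^ 2) := ⟨2 * p * k, by linarith⟩
    simpa [Int.even_sub, Int.even_pow] using this
  obtain ⟨m, hm⟩ := h_even
  obtain rfl : c = b + 2 * m := by linarith
  have h_dvd : p ∣ m * (b + m) := ⟨k, by linarith⟩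
  rcases hp.dvd_or_dvd h_dvd with ⟨l, hl⟩ | ⟨l, hl⟩
  · exact .inl (Int.modEq_iff_dvd.mpr ⟨l, by linarith⟩)
  · exact .inr (Int.modEq_iff_dvd.mpr ⟨-l, by linarith⟩)

namespace BinaryQF

variable {Q R S : BinaryQF}

protected theorem Equiv.symm (h : Q.Equiv R) : R.Equiv Q := by
  obtain ⟨p, q, r, s, hdet, h⟩ := h
  refine ⟨s, -q, -r, p, hdet.imp (fun hdet ↦ by linarith) (fun hdet ↦ by linarith), fun x y ↦ ?_⟩
  have hx : p * (s * x + -q * y) + q * (-r * x + p * y) = (p * s - q * r) * x := by ring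
  have hy : r * (s * x + -q * y) + s * (-r * x + p * y) = (p * s - q * r) * y := by ring
  rw [h, hx, hy]
  rcases hdet with hdet | hdet <;> simp only [hdet, eval] <;> ring

protected theorem Equiv.trans (hQR : Q.Equiv R) (hRS : R.Equiv S) : Q.Equiv S := by
  obtain ⟨p, q, r, s, hdet, h⟩ := hQR
  obtain ⟨p', q', r', s', hdet', h'⟩ := hRS
  refine ⟨p * p' + q * r', p * q' + q * s', r * p' + s * r', r * q' + s * s', ?_, fun x y ↦ ?_⟩
  · have hmul : (p * p' + q * r') * (r * q' + s * s') - (p * q' + q * s') * (r * p' + s * r')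
        = (p * s - q * r) * (p' * s' - q' * r') := by ring
    rw [hmul]
    rcases hdet with hdet | hdet <;> rcases hdet' with hdet' | hdet' <;> simp [hdet, hdet']
  · rw [h', h]
    simp only [eval]
    ring

theorem Equiv.disc_eq (h : Q.Equiv R) : Q.disc = R.disc := by
  obtain ⟨p, q, r, s, hdet, h⟩ := h
  have ha : R.a = Q.eval p r := by simpa [eval] using h 1 0
  have hc : R.c = Q.eval q s := by simpa [eval] using h 0 1
  have hb : R.b = 2 * Q.a * p * q + Q.b * (p * s + q * r) + 2 * Q.c * r * s := by
    have habc := h 1 1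
    simp only [eval] at ha hc habc
    linarith
  have hdet_sq : (p * s - q * r) ^ 2 = 1 := sq_eq_one_iff.mpr hdet
  calc Q.disc = (p * s - q * r) ^ 2 * Q.disc := by rw [hdet_sq, one_mul]
    _ = R.disc := by simp only [disc, ha, hb, hc, eval]; ring

theorem eval_mul_mul (Q : BinaryQF) (d x y : ℤ) :
    Q.eval (d * x) (d * y) = d * d * Q.eval x y := by
  simp only [eval]
  ring

theorem isCoprime_of_squarefree_eval {x y : ℤ} (h : Squarefree (Q.eval x y)) :
    IsCoprime x y := by
  refine IsRelPrime.isCoprime fun d hx hy ↦ h d ?_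
  obtain ⟨u, rfl⟩ := hx
  obtain ⟨v, rfl⟩ := hy
  exact ⟨Q.eval u v, Q.eval_mul_mul d u v⟩

theorem exists_equiv_a_eq_eval (Q : BinaryQF) {x y : ℤ} (h : IsCoprime x y) :
    ∃ R : BinaryQF, Q.Equiv R ∧ R.a = Q.eval x y := by
  obtain ⟨s, t, hst⟩ := h
  refine ⟨⟨Q.eval x y, 2 * Q.a * x * -t + Q.b * (x * s + -t * y) + 2 * Q.c * y * s,
    Q.eval (-t) s⟩, ⟨x, -t, y, s, .inl (by linarith), fun u v ↦ ?_⟩, rfl⟩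
  simp only [eval]
  ring

theorem Represents.exists_equiv_a_eq {n : ℤ} (h : Q.Represents n) (hn : Squarefree n) :
    ∃ R : BinaryQF, Q.Equiv R ∧ R.a = n := by
  obtain ⟨x, y, rfl⟩ := h
  exact Q.exists_equiv_a_eq_eval (isCoprime_of_squarefree_eval hn)

theorem equiv_neg_b (Q : BinaryQF) : Q.Equiv ⟨Q.a, -Q.b, Q.c⟩ :=
  ⟨1, 0, 0, -1, .inr (by norm_num), fun x y ↦ by simp only [eval]; ring⟩

theorem equiv_translate (Q : BinaryQF) (k : ℤ) :
    Q.Equiv ⟨Q.a, Q.b + 2 * Q.a * k, Q.eval k 1⟩ :=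
  ⟨1, k, 0, 1, .inl (by norm_num), fun x y ↦ by simp only [eval]; ring⟩

theorem eq_of_a_eq_of_b_eq_of_disc_eq (ha₀ : Q.a ≠ 0) (ha : Q.a = R.a) (hb : Q.b = R.b)
    (hdisc : Q.disc = R.disc) : Q = R := by
  obtain ⟨a, b, c⟩ := Q
  obtain ⟨a', b', c'⟩ := R
  obtain rfl : a = a' := ha
  obtain rfl : b = b' := hb
  have hc : a * c = a * c' := by
    simp only [disc] at hdisc
    linarith
  rw [mul_left_cancel₀ ha₀ hc]

theorem equiv_of_b_modEq (ha₀ : Q.a ≠ 0) (ha : Q.a = R.a) (hdisc : Q.disc = R.disc)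
    (hb : Q.b ≡ R.b [ZMOD 2 * Q.a]) : Q.Equiv R := by
  obtain ⟨k, hk⟩ := hb.dvd
  have htranslate := Q.equiv_translate k
  have hR : ⟨Q.a, Q.b + 2 * Q.a * k, Q.eval k 1⟩ = R :=
    eq_of_a_eq_of_b_eq_of_disc_eq ha₀ ha (by linarith) (htranslate.disc_eq.symm.trans hdisc)
  exact hR ▸ htranslate

theorem equiv_of_prime_a (hp : Prime Q.a) (ha : Q.a = R.a) (hdisc : Q.disc = R.disc) :
    Q.Equiv R := by
  have hsq : Q.b ^ 2 ≡ R.b ^ 2 [ZMOD 4 * Q.a] := by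
    refine Int.modEq_iff_dvd.mpr ⟨R.c - Q.c, ?_⟩
    simp only [disc, ← ha] at hdisc
    linarith
  rcases modEq_or_modEq_neg_of_sq_modEq_sq hp hsq with hb | hb
  · exact equiv_of_b_modEq hp.ne_zero ha hdisc hb
  · have hneg := R.equiv_neg_b
    have hQneg : Q.Equiv ⟨R.a, -R.b, R.c⟩ :=
      equiv_of_b_modEq hp.ne_zero ha (hdisc.trans hneg.disc_eq) hb
    exact hQneg.trans hneg.symm

end BinaryQF

theorem equiv_of_common_prime_general (Q Q₁ : BinaryQF) (hdisc : Q.disc = Q₁.disc)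
    (p : ℤ) (hp : Prime p) (hQ : Q.Represents p) (hQ₁ : Q₁.Represents p) :
    Q.Equiv Q₁ := by
  obtain ⟨R, hQR, hR⟩ := hQ.exists_equiv_a_eq hp.squarefree
  obtain ⟨R₁, hQR₁, hR₁⟩ := hQ₁.exists_equiv_a_eq hp.squarefree
  have hdiscR : R.disc = R₁.disc := by rw [← hQR.disc_eq, hdisc, hQR₁.disc_eq]
  have hRR₁ : R.Equiv R₁ :=
    BinaryQF.equiv_of_prime_a (hR.symm ▸ hp) (hR.trans hR₁.symm) hdiscR
  exact (hQR.trans hRR₁).trans hQR₁.symm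

/-- Two integral binary quadratic forms of the same discriminant both representing a
common prime `p` are GL₂(ℤ)-equivalent. -/
theorem equiv_of_common_prime (Q Q₁ : BinaryQF) (hdisc : Q.disc = Q₁.disc)
    (p : ℕ) (hp : p.Prime)
    (hQ : Q.Represents (p : ℤ)) (hQ₁ : Q₁.Represents (p : ℤ)) :
    Q.Equiv Q₁ :=
  equiv_of_common_prime_general Q Q₁ hdisc p (Nat.prime_iff_prime_int.mp hp) hQ hQ₁
end
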